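/- Let A, ε ∈ ℝ with 0 < ε < 1 and A − ε > 1. Then log((1−ε)²)/log((A−ε)/(A+ε)) < A/(1−ε). -/

import Mathlib

/-!
Since `log ((A - ε) / (A + ε)) = -2 artanh (ε / A)`, the left-hand side equals
`-log (1 - ε) / artanh (ε / A)`. The tangent-line bounds `-log (1 - ε) < ε / (1 - ε)` and
`ε / A ≤ artanh (ε / A)` then leave exactly `A / (1 - ε)`.
-/

open Real

theorem neg_log_one_sub_lt_div {x : ℝ} (hx : x < 1) (hx0 : x ≠ 0) :
    -log (1 - x) < x / (1 - x) := by
  have hpos : 0 < 1 - x := sub_pos.mpr hx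
  have hne : 1 - x ≠ 1 := by simpa using hx0
  calc -log (1 - x) = log (1 - x)⁻¹ := (log_inv _).symm
    _ < (1 - x)⁻¹ - 1 := log_lt_sub_one_of_pos (inv_pos.mpr hpos) (inv_ne_one.mpr hne)
    _ = x / (1 - x) := by field_simp; ring

theorem le_artanh {x : ℝ} (hx0 : 0 ≤ x) (hx1 : x < 1) : x ≤ artanh x := by
  rw [artanh_eq_half_log ⟨by linarith, hx1.le⟩]
  simpa using sum_range_le_log_div hx0 hx1 1

theorem log_sub_div_add_eq_neg_two_mul_artanh {a b : ℝ} (ha : a ≠ 0) (hab : |b| ≤ |a|) :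
    log ((a - b) / (a + b)) = -2 * artanh (b / a) := by
  have hmem : b / a ∈ Set.Icc (-1) 1 := by
    rwa [Set.mem_Icc, ← abs_le, abs_div, div_le_one (abs_pos.mpr ha)]
  have hquot : (1 + b / a) / (1 - b / a) = ((a - b) / (a + b))⁻¹ := by
    rw [one_add_div ha, one_sub_div ha, div_div_div_cancel_right₀ ha, inv_div]
  rw [artanh_eq_half_log hmem, hquot, log_inv]
  ring

theorem stmt_13_general (A ε : ℝ) (hε0 : 0 < ε) (hε1 : ε < 1) (hA : ε < A) :
    log ((1 - ε) ^ 2) / log ((A - ε) / (A + ε)) < A / (1 - ε) := by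
  have hA0 : 0 < A := hε0.trans hA
  have h1ε : 0 < 1 - ε := sub_pos.mpr hε1
  have hratio : ε / A ≤ artanh (ε / A) := le_artanh (by positivity) ((div_lt_one hA0).mpr hA)
  have hartanh : 0 < artanh (ε / A) := (div_pos hε0 hA0).trans_le hratio
  calc log ((1 - ε) ^ 2) / log ((A - ε) / (A + ε))
      = -log (1 - ε) / artanh (ε / A) := by
        rw [log_sub_div_add_eq_neg_two_mul_artanh hA0.ne'
          (abs_le_abs_of_nonneg hε0.le hA.le), log_pow]
        push_cast
        field_simp
    _ < ε / (1 - ε) / artanh (ε / A) := by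
        gcongr
        exact neg_log_one_sub_lt_div hε1 hε0.ne'
    _ ≤ ε / (1 - ε) / (ε / A) := by gcongr
    _ = A / (1 - ε) := by field_simp

/-- The tight scalar threshold `N̄ = 2^{R_nec}` is strictly smaller than `A/(1−ε)`,
the exponential of the sufficient bound of Martins et al. -/
theorem stmt_13 (A ε : ℝ) (hε0 : 0 < ε) (hε1 : ε < 1) (hA : 1 < A - ε) :
    Real.log ((1 - ε) ^ 2) / Real.log ((A - ε) / (A + ε)) < A / (1 - ε) :=
  stmt_13_general A ε hε0 hε1 (by linarith)
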